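/- Let P ⊂ ℝⁿ be an integral polytope of dimension d with Ehrhart polynomial L_P. Then L_P(0) = 1. -/

import Mathlib

open Pointwise

/-- Number of lattice points of a subset of `ℝⁿ`. -/
noncomputable def latticeCount {n : ℕ} (S : Set (Fin n → ℝ)) : ℕ :=
  Set.ncard {x ∈ S | ∀ i, ∃ m : ℤ, x i = m}

/-!
Choose the points `v 0, …, v k` of the lattice `Λ` whose convex hull is `P`. Every point of `Λ` in
`t • P` has exactly one lexicographically largest vector of nonnegative weights of sum `t`. Whether
a weight vector is lexicographically largest depends only on which of its coordinates other than
the one at `v 0` vanish, so subtracting integers without making such a coordinate vanish splits it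
uniquely into a vector of the half-open cube, again lexicographically largest, and a vector of
natural numbers. If the part in the cube has coordinate sum `h` and `m` coordinates may be
increased freely, it accounts for `(t - h + m - 1).choose (m - 1)` of the points in `t • P`.
Exactly one of these `m` coordinates is allowed to be `0`, none of them exceeds `1`, and that one is
less than `1`, so `h < m` and this binomial coefficient agrees with a polynomial in `t` at every
`t ≥ 0`, not merely for `t ≥ h`. Hence the number of points of `Λ` in `t • P` is a polynomial from
`t = 0` on, where `0` is the only point.
-/

section EhrhartPolynomial

open Finset Polynomial

section Lex

theorem exists_isMaxOn_toLex_of_isCompact {α : Type*} [LinearOrder α] [TopologicalSpace α]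
    [OrderClosedTopology α] {n : ℕ} {C : Set (Fin n → α)} (hC : IsCompact C) (hne : C.Nonempty) :
    ∃ x ∈ C, IsMaxOn toLex C x := by
  induction n with
  | zero =>
    obtain ⟨x, hx⟩ := hne
    exact ⟨x, hx, fun y _ => (congrArg toLex (Subsingleton.elim y x)).le⟩
  | succ n ih =>
    obtain ⟨m, hmC, hmax⟩ := hC.exists_isMaxOn hne (continuous_apply 0).continuousOn
    have hslice : IsCompact (Fin.tail '' (C ∩ {x | x 0 = m 0})) :=
      (hC.inter_right (isClosed_eq (continuous_apply 0) continuous_const)).image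
        (continuous_pi fun i => continuous_apply i.succ)
    obtain ⟨_, ⟨x, ⟨hxC, hx0⟩, rfl⟩, hx⟩ := ih hslice ⟨_, m, ⟨hmC, rfl⟩, rfl⟩
    refine ⟨x, hxC, isMaxOn_iff.2 fun y hyC => not_lt.1 ?_⟩
    rintro ⟨i, heq, hlt⟩
    cases i using Fin.cases with
    | zero => exact (hmax hyC).not_gt (hx0.symm.trans_lt hlt)
    | succ i =>
      have hy0 : y 0 = m 0 := (heq 0 i.succ_pos).symm.trans hx0
      exact (isMaxOn_iff.1 hx _ ⟨y, ⟨hyC, hy0⟩, rfl⟩).not_gt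
        ⟨i, fun j hj => heq j.succ (Fin.succ_lt_succ_iff.2 hj), hlt⟩

theorem toLex_lt_toLex_add_smul_sub {ι : Type*} [LT ι] {y z : ι → ℝ} (h : toLex y < toLex z)
    (x : ι → ℝ) {ε : ℝ} (hε : 0 < ε) : toLex x < toLex (x + ε • (z - y)) := by
  obtain ⟨i, heq, hlt⟩ := h
  refine ⟨i, fun j hj => ?_, ?_⟩
  · have : y j = z j := heq j hj
    simp [this]
  · have : y i < z i := hlt
    simpa using mul_pos hε (sub_pos.2 this)

theorem exists_pos_nonneg_add_smul {ι : Type*} [Finite ι] {x r : ι → ℝ} (hx : 0 ≤ x)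
    (hr : ∀ i, x i = 0 → 0 ≤ r i) : ∃ ε : ℝ, 0 < ε ∧ 0 ≤ x + ε • r := by
  have hcoord (i : ι) : ∀ᶠ ε in nhdsWithin (0 : ℝ) (Set.Ioi 0), 0 ≤ x i + ε * r i := by
    rcases (hx i).eq_or_lt with h | h
    · filter_upwards [self_mem_nhdsWithin] with ε hε
      exact add_nonneg (hx i) (mul_nonneg (le_of_lt hε) (hr i h.symm))
    · have hlim : Filter.Tendsto (fun ε : ℝ => x i + ε * r i) (nhds 0) (nhds (x i)) :=
        Continuous.tendsto' (by fun_prop) _ _ (by simp)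
      exact nhdsWithin_le_nhds ((hlim.eventually_const_lt h).mono fun _ => le_of_lt)
  obtain ⟨ε, hε, hpos⟩ := ((Filter.eventually_all.2 hcoord).and self_mem_nhdsWithin).exists
  exact ⟨ε, hpos, hε⟩

end Lex

section Weights

variable {E : Type*} [AddCommGroup E] [Module ℝ E]

/-- The ways of writing `p` as a nonnegative combination of the points `v` with total weight `t`;
for `t = 1` these are the convex combinations. -/
def weights {ι : Type*} [Fintype ι] (v : ι → E) (t : ℝ) (p : E) : Set (ι → ℝ) :=
  {x | 0 ≤ x ∧ ∑ i, x i = t ∧ Fintype.linearCombination ℝ v x = p}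

section Fintype

variable {ι : Type*} [Fintype ι]

theorem convexHull_range_eq_image_stdSimplex (v : ι → E) :
    convexHull ℝ (Set.range v) = Fintype.linearCombination ℝ v '' stdSimplex ℝ ι := by
  classical
  rw [← convexHull_rangle_single_eq_stdSimplex, LinearMap.image_convexHull, ← Set.range_comp]
  congr
  ext i
  simp

theorem weights_nonempty_iff [Nonempty ι] (v : ι → E) {t : ℝ} (ht : 0 ≤ t) (p : E) :
    (weights v t p).Nonempty ↔ p ∈ t • convexHull ℝ (Set.range v) := by
  classical
  rw [convexHull_range_eq_image_stdSimplex, ← image_smul_set]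
  constructor
  · rintro ⟨x, hx, hsum, rfl⟩
    refine Set.mem_image_of_mem _ ?_
    rcases ht.eq_or_lt with rfl | ht
    · rw [Set.zero_smul_set ⟨_, single_mem_stdSimplex ℝ (Classical.arbitrary ι)⟩]
      exact funext fun i => (sum_eq_zero_iff_of_nonneg fun i _ => hx i).1 hsum i (mem_univ i)
    · refine ⟨t⁻¹ • x, ⟨fun i => mul_nonneg (inv_nonneg.2 ht.le) (hx i), ?_⟩,
        smul_inv_smul₀ ht.ne' x⟩
      simp [← mul_sum, hsum, ht.ne']
  · rintro ⟨_, ⟨x, hx, rfl⟩, rfl⟩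
    exact ⟨t • x, smul_nonneg ht hx.1, by simp [← mul_sum, hx.2], rfl⟩

theorem isCompact_weights [TopologicalSpace E] [IsTopologicalAddGroup E] [ContinuousSMul ℝ E]
    [T2Space E] (v : ι → E) (t : ℝ) (p : E) : IsCompact (weights v t p) := by
  have hclosed : IsClosed (weights v t p) :=
    isClosed_Ici.inter <| (isClosed_eq (by fun_prop) continuous_const).inter <|
      isClosed_eq (LinearMap.continuous_of_finiteDimensional _) continuous_const
  refine isCompact_Icc.of_isClosed_subset (s := Set.Icc 0 fun _ => t) hclosed ?_
  rintro x ⟨hx, hsum, -⟩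
  exact ⟨hx, fun i => hsum ▸ single_le_sum (fun j _ => hx j) (mem_univ i)⟩

end Fintype

/- A lexicographically larger vector of the same sum cannot be smaller at coordinate `0`, so moving
from `x` in the direction `z - y` keeps coordinate `0` nonnegative even when it vanishes at `x`. -/
theorem isMaxOn_toLex_weights_of_eq_zero {k : ℕ} {v : Fin (k + 1) → E} {s t : ℝ} {p q : E}
    {x y : Fin (k + 1) → ℝ} (hmax : IsMaxOn toLex (weights v t p) x) (hx : x ∈ weights v t p)
    (hy : y ∈ weights v s q) (hxy : ∀ i ≠ 0, x i = 0 → y i = 0) :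
    IsMaxOn toLex (weights v s q) y := by
  refine isMaxOn_iff.2 fun z hz => not_lt.1 fun hlt => ?_
  have hr (i) (hi : x i = 0) : 0 ≤ (z - y) i := by
    rcases eq_or_ne i 0 with rfl | hi0
    · exact sub_nonneg.2 (Pi.apply_le_of_toLex hlt.le fun j hj => absurd hj j.not_lt_zero)
    · simpa [hxy i hi0 hi] using hz.1 i
  obtain ⟨ε, hε, hnonneg⟩ := exists_pos_nonneg_add_smul hx.1 hr
  have hmem : x + ε • (z - y) ∈ weights v t p := by
    refine ⟨hnonneg, ?_, ?_⟩
    · simp [sum_add_distrib, ← mul_sum, hx.2.1, hy.2.1, hz.2.1]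
    · simp [hx.2.2, hy.2.2, hz.2.2]
  exact (hmax hmem).not_gt (toLex_lt_toLex_add_smul_sub hlt x hε)

/-- The lexicographically largest weight vectors of sum `t` of the points of `Λ`. Their supports are
the faces of a pulling triangulation of the convex hull of `v`, in which `v 0` is pulled first and
is thus a vertex of all maximal cells; this is why the coordinate `0` is special below. -/
def normalForms {k : ℕ} (Λ : AddSubgroup E) (v : Fin k → E) (t : ℝ) : Set (Fin k → ℝ) :=
  {x | ∃ p ∈ Λ, x ∈ weights v t p ∧ IsMaxOn toLex (weights v t p) x}

variable {k : ℕ} {Λ : AddSubgroup E}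

theorem injOn_normalForms (v : Fin k → E) (t : ℝ) :
    Set.InjOn (Fintype.linearCombination ℝ v) (normalForms Λ v t) := by
  rintro x ⟨p, -, hx, hxmax⟩ y ⟨q, -, hy, hymax⟩ h
  obtain rfl : p = q := hx.2.2.symm.trans (h.trans hy.2.2)
  exact toLex.injective ((hymax hx).antisymm (hxmax hy))

theorem image_normalForms [TopologicalSpace E] [IsTopologicalAddGroup E] [ContinuousSMul ℝ E]
    [T2Space E] (v : Fin (k + 1) → E) {t : ℝ} (ht : 0 ≤ t) :
    Fintype.linearCombination ℝ v '' normalForms Λ v t =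
      t • convexHull ℝ (Set.range v) ∩ Λ := by
  ext p
  rw [Set.mem_inter_iff, ← weights_nonempty_iff v ht]
  constructor
  · rintro ⟨x, ⟨p, hp, hx, -⟩, rfl⟩
    rw [hx.2.2]
    exact ⟨⟨x, hx⟩, hp⟩
  · rintro ⟨hne, hp⟩
    obtain ⟨x, hx, hmax⟩ := exists_isMaxOn_toLex_of_isCompact (isCompact_weights v t p) hne
    exact ⟨x, ⟨p, hp, hx, hmax⟩, hx.2.2⟩

theorem mem_normalForms_of_eq_zero {v : Fin (k + 1) → E} {s t : ℝ} {x y : Fin (k + 1) → ℝ}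
    (hx : x ∈ normalForms Λ v t) (hy : 0 ≤ y) (hsum : ∑ i, y i = s)
    (hΛ : Fintype.linearCombination ℝ v y ∈ Λ) (hxy : ∀ i ≠ 0, x i = 0 → y i = 0) :
    y ∈ normalForms Λ v s := by
  obtain ⟨p, -, hx, hmax⟩ := hx
  have hy : y ∈ weights v s (Fintype.linearCombination ℝ v y) := ⟨hy, hsum, rfl⟩
  exact ⟨_, hΛ, hy, isMaxOn_toLex_weights_of_eq_zero hmax hx hy hxy⟩

end Weights

section Box

variable {k : ℕ}

/-- The cube `[0, 1) × [0, 1]ᵏ`. The value `0` at a coordinate other than `0` records that the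
coordinate is absent from the support, so that on the support these coordinates range over
`(0, 1]`. -/
def halfOpenCube (k : ℕ) : Set (Fin (k + 1) → ℝ) :=
  {b | 0 ≤ b ∧ b ≤ 1 ∧ b 0 < 1}

/-- The natural numbers to subtract from a nonnegative vector to reach `halfOpenCube` without making
further coordinates other than `0` vanish; truncated subtraction gives `⌈0⌉₊ - 1 = 0`. -/
noncomputable def integerPart (x : Fin (k + 1) → ℝ) (i : Fin (k + 1)) : ℕ :=
  if i = 0 then ⌊x i⌋₊ else ⌈x i⌉₊ - 1

/-- The remainder of a vector after subtraction of its `integerPart`, which represents a nonnegative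
vector modulo `ℕᵏ⁺¹` in the half-open cube. -/
noncomputable def boxPart (x : Fin (k + 1) → ℝ) (i : Fin (k + 1)) : ℝ :=
  x i - integerPart x i

open Classical in
/-- The coordinates at which natural numbers can be added to `b` without changing its `boxPart`. -/
noncomputable def freeCoords (b : Fin (k + 1) → ℝ) : Finset (Fin (k + 1)) :=
  insert 0 ({i | b i ≠ 0} : Finset (Fin (k + 1)))

theorem notMem_freeCoords {b : Fin (k + 1) → ℝ} {i : Fin (k + 1)} :
    i ∉ freeCoords b ↔ i ≠ 0 ∧ b i = 0 := by
  simp [freeCoords]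

theorem boxPart_add_integerPart (x : Fin (k + 1) → ℝ) :
    (fun i => boxPart x i + integerPart x i) = x :=
  funext fun _ => sub_add_cancel _ _

theorem boxPart_zero_apply (x : Fin (k + 1) → ℝ) : boxPart x 0 = x 0 - ⌊x 0⌋₊ := by
  simp [boxPart, integerPart]

theorem boxPart_apply_of_ne_zero (x : Fin (k + 1) → ℝ) {i : Fin (k + 1)} (hi : i ≠ 0) :
    boxPart x i = x i - (⌈x i⌉₊ - 1 : ℕ) := by
  simp [boxPart, integerPart, hi]

theorem boxPart_eq_zero_iff {x : Fin (k + 1) → ℝ} (hx : 0 ≤ x) {i : Fin (k + 1)} (hi : i ≠ 0) :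
    boxPart x i = 0 ↔ x i = 0 := by
  rw [boxPart_apply_of_ne_zero x hi]
  refine ⟨fun h => ?_, fun h => by simp [h]⟩
  by_contra hne
  have hpos : 0 < x i := (hx i).lt_of_ne' hne
  exact (sub_pos.2 (Nat.lt_ceil.1 (Nat.sub_one_lt (Nat.ceil_pos.2 hpos).ne'))).ne' h

theorem boxPart_mem_halfOpenCube {x : Fin (k + 1) → ℝ} (hx : 0 ≤ x) :
    boxPart x ∈ halfOpenCube k := by
  have hlt : boxPart x 0 < 1 :=
    boxPart_zero_apply x ▸ sub_lt_iff_lt_add'.2 (Nat.lt_floor_add_one (x 0))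
  refine ⟨fun i => ?_, fun i => ?_, hlt⟩ <;> rcases eq_or_ne i 0 with rfl | hi
  · exact boxPart_zero_apply x ▸ sub_nonneg.2 (Nat.floor_le (hx 0))
  · rw [boxPart_apply_of_ne_zero x hi, Pi.zero_apply, sub_nonneg]
    rcases Nat.eq_zero_or_pos ⌈x i⌉₊ with h | h
    · simpa [h] using hx i
    · exact (Nat.lt_ceil.1 (Nat.sub_one_lt h.ne')).le
  · exact hlt.le
  · have hceil : ⌈x i⌉₊ ≤ 1 + (⌈x i⌉₊ - 1) := by omega
    rw [boxPart_apply_of_ne_zero x hi, Pi.one_apply, sub_le_iff_le_add]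
    exact (Nat.ceil_le.1 hceil).trans_eq (by rw [Nat.cast_add, Nat.cast_one])

theorem boxPart_add_natCast {b : Fin (k + 1) → ℝ} (hb : b ∈ halfOpenCube k)
    {m : Fin (k + 1) → ℕ} (hm : ∀ i ∉ freeCoords b, m i = 0) :
    boxPart (fun i => b i + m i) = b := by
  obtain ⟨hb0, hb1, hb01⟩ := hb
  have hint (i : Fin (k + 1)) : integerPart (fun i => b i + m i) i = m i := by
    rcases eq_or_ne i 0 with rfl | hi
    · simp [integerPart, Nat.floor_add_natCast (hb0 0), Nat.floor_eq_zero.2 hb01]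
    rcases eq_or_ne (b i) 0 with hbi | hbi
    · simp [integerPart, hi, hbi, hm i (notMem_freeCoords.2 ⟨hi, hbi⟩)]
    · have hceil : ⌈b i⌉₊ = 1 :=
        (Nat.ceil_eq_iff one_ne_zero).2 ⟨by simpa using (hb0 i).lt_of_ne' hbi, by simpa using hb1 i⟩
      simp [integerPart, hi, Nat.ceil_add_natCast (hb0 i), hceil]
  exact funext fun i => by simp [boxPart, hint]

theorem sum_lt_card_freeCoords {b : Fin (k + 1) → ℝ} (hb : b ∈ halfOpenCube k) :
    ∑ i, b i < (freeCoords b).card := by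
  have h0 : 0 ∈ freeCoords b := mem_insert_self _ _
  calc ∑ i, b i = ∑ i ∈ freeCoords b, b i :=
        (sum_subset (subset_univ _) fun i _ hi => (notMem_freeCoords.1 hi).2).symm
    _ < ∑ _ ∈ freeCoords b, (1 : ℝ) := sum_lt_sum (fun _ _ => hb.2.1 _) ⟨0, h0, hb.2.2⟩
    _ = (freeCoords b).card := by simp

end Box

section Counting

/- For `t < h` both sides vanish, since then `t + (T.card - 1 - h) < T.card - 1`. -/
theorem ncard_setOf_add_sum_eq {ι : Type*} [Fintype ι] {T : Finset ι} {h : ℕ} (hT : h < T.card)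
    (t : ℕ) :
    {m : ι → ℕ | (∀ i ∉ T, m i = 0) ∧ h + ∑ i, m i = t}.ncard =
      (t + (T.card - 1 - h)).choose (T.card - 1) := by
  classical
  rcases lt_or_ge t h with hlt | hle
  · have hempty : {m : ι → ℕ | (∀ i ∉ T, m i = 0) ∧ h + ∑ i, m i = t} = ∅ :=
      Set.eq_empty_of_forall_notMem fun m hm => by have := hm.2; omega
    rw [hempty, Set.ncard_empty, Nat.choose_eq_zero_of_lt (by omega)]
  · have heq : {m : ι → ℕ | (∀ i ∉ T, m i = 0) ∧ h + ∑ i, m i = t} =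
        T.piAntidiag (t - h) := by
      ext m
      have hsum (hm : ∀ i ∉ T, m i = 0) : ∑ i ∈ T, m i = ∑ i, m i :=
        sum_subset (subset_univ T) fun i _ => hm i
      simp only [Set.mem_ofPred_eq, mem_coe, mem_piAntidiag, ← not_imp_comm (a := _ ∈ T), and_comm]
      refine and_congr_left fun hm => ?_
      rw [hsum hm]
      omega
    have hcard : (T.piAntidiag (t - h)).card = (T.finsuppAntidiag (t - h)).card := by
      simp [finsuppAntidiag]
    rw [heq, Set.ncard_coe_finset, hcard, card_finsuppAntidiag_nat_eq_choose,
      ← Nat.choose_symm (by omega)]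
    congr 1 <;> omega

theorem exists_polynomial_eval_eq_choose (c k : ℕ) :
    ∃ p : ℚ[X], ∀ t : ℕ, p.eval (t : ℚ) = (t + c).choose k := by
  refine ⟨C (k.factorial : ℚ)⁻¹ * (descPochhammer ℚ k).comp (X + C (c : ℚ)), fun t => ?_⟩
  rw [Nat.cast_choose_eq_descPochhammer_div]
  simp [div_eq_inv_mul]

end Counting

section Ehrhart

variable {E : Type*} [AddCommGroup E] [Module ℝ E] {k : ℕ} {Λ : AddSubgroup E}
  {v : Fin (k + 1) → E}

theorem linearCombination_add_natCast_mem_iff {ι : Type*} [Fintype ι] {v : ι → E}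
    (hv : ∀ i, v i ∈ Λ) (b : ι → ℝ) (m : ι → ℕ) :
    Fintype.linearCombination ℝ v (fun i => b i + m i) ∈ Λ ↔
      Fintype.linearCombination ℝ v b ∈ Λ := by
  change Fintype.linearCombination ℝ v (b + fun i => (m i : ℝ)) ∈ Λ ↔ _
  rw [map_add]
  refine Λ.add_mem_cancel_right ?_
  simp only [Fintype.linearCombination_apply, Nat.cast_smul_eq_nsmul]
  exact sum_mem fun i _ => nsmul_mem (hv i) _

theorem boxPart_mem_normalForms (hv : ∀ i, v i ∈ Λ) {t : ℕ} {x : Fin (k + 1) → ℝ}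
    (hx : x ∈ normalForms Λ v t) : ∃ h ≤ k, boxPart x ∈ normalForms Λ v (h : ℕ) := by
  obtain ⟨p, hp, ⟨hx0, hsum, hxp⟩, -⟩ := id hx
  have hbox := boxPart_mem_halfOpenCube hx0
  have hheight : ∑ i, boxPart x i = ((t - ∑ i, integerPart x i : ℤ) : ℝ) := by
    simp [boxPart, hsum]
  have hnonneg : (0 : ℤ) ≤ t - ∑ i, integerPart x i := by
    exact_mod_cast hheight ▸ sum_nonneg fun i _ => hbox.1 i
  obtain ⟨h, hh⟩ := Int.eq_ofNat_of_zero_le hnonneg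
  rw [hh, Int.cast_natCast] at hheight
  refine ⟨h, ?_, mem_normalForms_of_eq_zero hx hbox.1 hheight ?_
    fun i hi => (boxPart_eq_zero_iff hx0 hi).2⟩
  · have hlt : h < (freeCoords (boxPart x)).card := by
      exact_mod_cast hheight ▸ sum_lt_card_freeCoords hbox
    have hle := card_le_univ (freeCoords (boxPart x))
    rw [Fintype.card_fin] at hle
    omega
  · rw [← linearCombination_add_natCast_mem_iff hv _ (integerPart x), boxPart_add_integerPart, hxp]
    exact hp

theorem setOf_boxPart_eq (hv : ∀ i, v i ∈ Λ) {b : Fin (k + 1) → ℝ} {h : ℕ}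
    (hb : b ∈ normalForms Λ v h) (hbox : b ∈ halfOpenCube k) (t : ℕ) :
    {x ∈ normalForms Λ v t | boxPart x = b} =
      (fun (m : Fin (k + 1) → ℕ) i => b i + m i) ''
        {m | (∀ i ∉ freeCoords b, m i = 0) ∧ h + ∑ i, m i = t} := by
  obtain ⟨p, hp, ⟨-, hsum, hbp⟩, -⟩ := id hb
  ext x
  constructor
  · rintro ⟨⟨q, -, ⟨hx, hxsum, -⟩, -⟩, rfl⟩
    refine ⟨integerPart x, ⟨fun i hi => ?_, ?_⟩, boxPart_add_integerPart x⟩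
    · obtain ⟨hi, hzero⟩ := notMem_freeCoords.1 hi
      simp [integerPart, hi, (boxPart_eq_zero_iff hx hi).1 hzero]
    · rw [← boxPart_add_integerPart x, sum_add_distrib, hsum] at hxsum
      exact_mod_cast hxsum
  · rintro ⟨m, ⟨hm, hmsum⟩, rfl⟩
    refine ⟨mem_normalForms_of_eq_zero hb (fun i => add_nonneg (hbox.1 i) (m i).cast_nonneg) ?_ ?_
      fun i hi hbi => ?_, boxPart_add_natCast hbox hm⟩
    · rw [sum_add_distrib, hsum, ← hmsum]
      push_cast
      rfl
    · rwa [linearCombination_add_natCast_mem_iff hv, hbp]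
    · simp [hbi, hm i (notMem_freeCoords.2 ⟨hi, hbi⟩)]

theorem exists_polynomial_ncard_boxPart_eq (hv : ∀ i, v i ∈ Λ) (b : Fin (k + 1) → ℝ) :
    ∃ p : ℚ[X], ∀ t : ℕ,
      p.eval (t : ℚ) = {x ∈ normalForms Λ v t | boxPart x = b}.ncard := by
  by_cases hb : b ∈ halfOpenCube k ∧ ∃ h : ℕ, b ∈ normalForms Λ v h
  · obtain ⟨hbox, h, hbh⟩ := hb
    have hlt : h < (freeCoords b).card := by
      obtain ⟨p, -, ⟨-, hsum, -⟩, -⟩ := hbh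
      exact_mod_cast hsum ▸ sum_lt_card_freeCoords hbox
    have hinj : Function.Injective fun (m : Fin (k + 1) → ℕ) i => b i + (m i : ℝ) :=
      fun m m' hmm => funext fun i => by simpa using congrFun hmm i
    obtain ⟨p, hp⟩ := exists_polynomial_eval_eq_choose ((freeCoords b).card - 1 - h)
      ((freeCoords b).card - 1)
    refine ⟨p, fun t => ?_⟩
    rw [hp, setOf_boxPart_eq hv hbh hbox, Set.ncard_image_of_injective _ hinj,
      ncard_setOf_add_sum_eq hlt]
  · have hempty (t : ℕ) : {x ∈ normalForms Λ v t | boxPart x = b} = ∅ := by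
      refine Set.eq_empty_of_forall_notMem ?_
      rintro x ⟨hx, rfl⟩
      obtain ⟨h, -, hh⟩ := boxPart_mem_normalForms hv hx
      obtain ⟨p, -, ⟨hx0, -⟩, -⟩ := hx
      exact hb ⟨boxPart_mem_halfOpenCube hx0, h, hh⟩
    exact ⟨0, fun t => by simp [hempty]⟩

theorem exists_polynomial_ncard_normalForms (hv : ∀ i, v i ∈ Λ)
    (hfin : ∀ t : ℕ, (normalForms Λ v t).Finite) :
    ∃ p : ℚ[X], ∀ t : ℕ, p.eval (t : ℚ) = (normalForms Λ v t).ncard := by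
  classical
  choose p hp using exists_polynomial_ncard_boxPart_eq hv
  have hB : (⋃ h ∈ Set.Iic k, normalForms Λ v (h : ℕ)).Finite :=
    (Set.finite_Iic k).biUnion fun h _ => hfin h
  refine ⟨∑ b ∈ hB.toFinset, p b, fun t => ?_⟩
  have hmaps : Set.MapsTo boxPart ((hfin t).toFinset : Set (Fin (k + 1) → ℝ)) hB.toFinset := by
    intro x hx
    simpa using boxPart_mem_normalForms hv ((hfin t).mem_toFinset.1 hx)
  have hfiber (b : Fin (k + 1) → ℝ) : {x ∈ normalForms Λ v t | boxPart x = b} =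
      ({x ∈ (hfin t).toFinset | boxPart x = b} : Finset _) := by
    ext x
    simp
  simp only [eval_finsetSum, hp]
  rw [Set.ncard_eq_toFinset_card _ (hfin t), card_eq_sum_card_fiberwise hmaps, Nat.cast_sum]
  simp only [hfiber, Set.ncard_coe_finset]

theorem finite_inter_of_isCompact {G : Type*} [AddGroup G] [TopologicalSpace G]
    [IsTopologicalAddGroup G] [T2Space G] (Λ : AddSubgroup G) [DiscreteTopology Λ] {K : Set G}
    (hK : IsCompact K) : (K ∩ Λ).Finite :=
  (hK.inter_right AddSubgroup.isClosed_of_discrete).finite <|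
    (SetLike.isDiscrete_iff_discreteTopology.2 ‹_›).mono Set.inter_subset_right

theorem eq_of_forall_pos_natCast_eval_eq {R : Type*} [CommRing R] [IsDomain R] [CharZero R]
    {p q : R[X]} (h : ∀ t : ℕ, 0 < t → p.eval (t : R) = q.eval (t : R)) : p = q := by
  refine eq_of_infinite_eval_eq p q <|
    ((Set.Ioi_infinite 0).image Nat.cast_injective.injOn).mono ?_
  rintro _ ⟨t, ht, rfl⟩
  exact h t ht

variable [TopologicalSpace E] [IsTopologicalAddGroup E] [ContinuousSMul ℝ E] [T2Space E]

theorem exists_ehrhartPolynomial (Λ : AddSubgroup E) [DiscreteTopology Λ] {V : Set E}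
    (hfin : V.Finite) (hne : V.Nonempty) (hVΛ : V ⊆ Λ) :
    ∃ p : ℚ[X], ∀ t : ℕ, p.eval (t : ℚ) = ((t : ℝ) • convexHull ℝ V ∩ Λ).ncard := by
  obtain ⟨n, v, rfl⟩ := hfin.fin_embedding
  obtain ⟨k, rfl⟩ : ∃ k, n = k + 1 := by
    have hn : 0 < n := Fin.pos_iff_nonempty.2 (Set.range_nonempty_iff_nonempty.1 hne)
    exact Nat.exists_eq_succ_of_ne_zero hn.ne'
  have himage (t : ℕ) := image_normalForms (Λ := Λ) v t.cast_nonneg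
  have hfinite (t : ℕ) : (normalForms Λ v t).Finite :=
    .of_finite_image (himage t ▸ finite_inter_of_isCompact Λ
      ((hfin.isCompact_convexHull ℝ).smul (t : ℝ))) (injOn_normalForms v t)
  obtain ⟨p, hp⟩ := exists_polynomial_ncard_normalForms (Set.range_subset_iff.1 hVΛ) hfinite
  exact ⟨p, fun t => by rw [hp, ← himage, (injOn_normalForms v t).ncard_image]⟩

theorem stmt13_general (Λ : AddSubgroup E) [DiscreteTopology Λ] {V : Set E}
    (hfin : V.Finite) (hne : V.Nonempty) (hVΛ : V ⊆ Λ) (L : ℚ[X])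
    (hL : ∀ t : ℕ, 0 < t → L.eval (t : ℚ) = ((t : ℝ) • convexHull ℝ V ∩ Λ).ncard) :
    L.eval 0 = 1 := by
  obtain ⟨p, hp⟩ := exists_ehrhartPolynomial Λ hfin hne hVΛ
  obtain rfl : L = p := eq_of_forall_pos_natCast_eval_eq fun t ht => (hL t ht).trans (hp t).symm
  have hzero : (((0 : ℕ) : ℝ) • convexHull ℝ V ∩ Λ : Set E) = {0} := by
    rw [Nat.cast_zero, Set.zero_smul_set hne.convexHull]
    exact Set.inter_eq_left.2 (Set.singleton_subset_iff.2 Λ.zero_mem)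
  rw [← Nat.cast_zero, hp, hzero, Set.ncard_singleton, Nat.cast_one]

end Ehrhart

end EhrhartPolynomial

section IntegerLattice

/-- The lattice `ℤⁿ` as a subgroup of `ℝⁿ`, encoded as the `ℤ`-span of the standard basis. -/
def integerLattice (n : ℕ) : AddSubgroup (Fin n → ℝ) :=
  (Submodule.span ℤ (Set.range (Pi.basisFun ℝ (Fin n)))).toAddSubgroup

variable {n : ℕ}

instance : DiscreteTopology (integerLattice n) :=
  inferInstanceAs (DiscreteTopology (Submodule.span ℤ (Set.range (Pi.basisFun ℝ (Fin n)))))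

theorem mem_integerLattice_iff {x : Fin n → ℝ} :
    x ∈ integerLattice n ↔ ∀ i, ∃ m : ℤ, x i = m := by
  simp [integerLattice, Module.Basis.mem_span_iff_repr_mem, eq_comm]

theorem image_intCast_subset_integerLattice (V : Set (Fin n → ℤ)) :
    (fun (v : Fin n → ℤ) (i : Fin n) => (v i : ℝ)) '' V ⊆ integerLattice n :=
  Set.image_subset_iff.2 fun v _ => mem_integerLattice_iff.2 fun i => ⟨v i, rfl⟩

theorem latticeCount_eq_ncard_inter (S : Set (Fin n → ℝ)) :
    latticeCount S = (S ∩ integerLattice n).ncard :=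
  congrArg Set.ncard <| Set.ext fun _ => and_congr_right fun _ => mem_integerLattice_iff.symm

end IntegerLattice

theorem stmt13 (n d : ℕ) (V : Finset (Fin n → ℤ)) (hV : V.Nonempty)
    (P : Set (Fin n → ℝ))
    (hP : P = convexHull ℝ ((fun (v : Fin n → ℤ) (i : Fin n) => (v i : ℝ)) '' V))
    (hd : Module.finrank ℝ (affineSpan ℝ P).direction = d)
    (L : Polynomial ℚ)
    (hL : ∀ t : ℕ, 0 < t → L.eval (t : ℚ) = latticeCount ((t : ℝ) • P)) :
    L.eval 0 = 1 :=
  stmt13_general (integerLattice n) (V.finite_toSet.image _) (hV.to_set.image _)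
    (image_intCast_subset_integerLattice _) L
    (by simpa only [hP, latticeCount_eq_ncard_inter] using hL)
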